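/- Let m > d/2 be an integer and let B(x₀, r) ⊂ ℝ^d be a ball with r small. For f ∈ C^m on a neighborhood of B(x₀, r), U ⊂ B(x₀, r/2) measurable, ψ ∈ C_0^∞(U) nonnegative not identically zero, and Ψ(f) = (∫_U ψ)^{-1}∫_U fψ, there is a constant C = C(d, m) such that ‖f - Ψ(f)‖²_{L²(U)} ≤ C Σ_{1 ≤ |α| ≤ m} r^{2|α|} ‖∂^α f‖²_{L²(B(x₀, r))}. -/

import Mathlib

open MeasureTheory Metric Set

/-- Cauchy–Schwarz on the unit interval against the integrable weight `s ^ (-1 / 2)`. -/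
theorem sq_integral_le_two_mul_integral_sqrt_mul_sq {g : ℝ → ℝ} (hg : Continuous g) :
    (∫ s in (0 : ℝ)..1, g s) ^ 2 ≤ 2 * ∫ s in (0 : ℝ)..1, √s * g s ^ 2 := by
  set I := ∫ s in (0 : ℝ)..1, g s with hI
  have hw : IntervalIntegrable (fun s : ℝ ↦ s ^ (-1 / 2 : ℝ)) volume 0 1 :=
    intervalIntegral.intervalIntegrable_rpow' (by norm_num)
  have hw_int : ∫ s in (0 : ℝ)..1, s ^ (-1 / 2 : ℝ) = 2 := by
    rw [integral_rpow (Or.inl (by norm_num))]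
    norm_num
  have hsq : IntervalIntegrable (fun s : ℝ ↦ √s * g s ^ 2) volume 0 1 :=
    (by fun_prop : Continuous fun s : ℝ ↦ √s * g s ^ 2).intervalIntegrable 0 1
  have key : ∫ s in (0 : ℝ)..1, I * g s ≤
      ∫ s in (0 : ℝ)..1, (√s * g s ^ 2 + I ^ 2 / 4 * s ^ (-1 / 2 : ℝ)) := by
    refine intervalIntegral.integral_mono_on_of_le_Ioo zero_le_one
      ((hg.const_mul I).intervalIntegrable 0 1) (hsq.add (hw.const_mul _)) fun s hs ↦ ?_
    have hs' : 0 < √s := Real.sqrt_pos.2 hs.1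
    have hpow : s ^ (-1 / 2 : ℝ) = (√s)⁻¹ := by
      rw [Real.sqrt_eq_rpow, ← Real.rpow_neg hs.1.le]
      norm_num
    have hrew : √s * g s ^ 2 + I ^ 2 / 4 * (√s)⁻¹ - I * g s =
        (√s)⁻¹ * (√s * g s - I / 2) ^ 2 := by
      field_simp
      ring
    have : 0 ≤ (√s)⁻¹ * (√s * g s - I / 2) ^ 2 := by positivity
    rw [hpow]
    linarith
  rw [intervalIntegral.integral_add hsq (hw.const_mul _), intervalIntegral.integral_const_mul,
    intervalIntegral.integral_const_mul, hw_int, ← hI] at key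
  linarith

/-- Squared Taylor formula at `z` with the remainder controlled by a weighted `L²` integral along
the segment joining `y` to `z`. -/
theorem sq_sub_le_of_contDiff {E : Type*} [NormedAddCommGroup E] [NormedSpace ℝ E] {n : ℕ}
    {f : E → ℝ} (hf : ContDiff ℝ (n + 1) f) (y z : E) :
    (f z - f y) ^ 2 ≤
      2 * n * ∑ k ∈ Finset.range n, (‖y - z‖ ^ (k + 1)) ^ 2 * ‖iteratedFDeriv ℝ (k + 1) f z‖ ^ 2 +
      4 * ((‖y - z‖ ^ (n + 1)) ^ 2 * ∫ s in (0 : ℝ)..1,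
        √s * (s ^ (2 * n) * ‖iteratedFDeriv ℝ (n + 1) f (y + s • (z - y))‖ ^ 2)) := by
  have hcont : Continuous (iteratedFDeriv ℝ (n + 1) f) :=
    hf.continuous_iteratedFDeriv (by norm_cast)
  have hterm : ∀ (k : ℕ) (x : E), |iteratedFDeriv ℝ k f x fun _ ↦ y - z| ≤
      ‖y - z‖ ^ k * ‖iteratedFDeriv ℝ k f x‖ := fun k x ↦ by
    have := (iteratedFDeriv ℝ k f x).le_opNorm fun _ ↦ y - z
    simpa [mul_comm] using this
  have hfact : ∀ k : ℕ, |((k.factorial : ℝ))⁻¹| ≤ 1 := fun k ↦ by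
    rw [abs_of_nonneg (by positivity)]
    exact inv_le_one_of_one_le₀ (by exact_mod_cast k.factorial_pos)
  set A := ∑ k ∈ Finset.range n,
    ((k + 1).factorial : ℝ)⁻¹ • iteratedFDeriv ℝ (k + 1) f z (fun _ ↦ y - z) with hA
  set R := ∫ s in (0 : ℝ)..1,
    s ^ n * iteratedFDeriv ℝ (n + 1) f (y + s • (z - y)) (fun _ ↦ y - z) with hR
  have htaylor : f y - f z = A + (n.factorial : ℝ)⁻¹ * R := by
    have h := map_add_eq_sum_add_integral_iteratedFDeriv (f := f) (x := z) (y := y - z) (n := n)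
      fun t _ ↦ hf.contDiffAt
    rw [Finset.sum_range_succ'] at h
    have hsubst := intervalIntegral.integral_comp_sub_left
      (fun s ↦ s ^ n * iteratedFDeriv ℝ (n + 1) f (y + s • (z - y)) (fun _ ↦ y - z)) (1 : ℝ)
      (a := 0) (b := 1)
    have hpt : ∀ t : ℝ, y + (1 - t) • (z - y) = z + t • (y - z) := fun t ↦ by module
    simp only [hpt, sub_self, sub_zero] at hsubst
    simp only [add_sub_cancel, smul_eq_mul, hsubst] at h
    rw [h, hA, hR]
    simp
    ring
  have hAsq : A ^ 2 ≤ n * ∑ k ∈ Finset.range n,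
      (‖y - z‖ ^ (k + 1)) ^ 2 * ‖iteratedFDeriv ℝ (k + 1) f z‖ ^ 2 := by
    have h := sq_sum_le_card_mul_sum_sq (s := Finset.range n) (f := fun k ↦
      ((k + 1).factorial : ℝ)⁻¹ • iteratedFDeriv ℝ (k + 1) f z (fun _ ↦ y - z))
    rw [Finset.card_range] at h
    refine h.trans ?_
    gcongr with k _
    rw [← mul_pow, sq_le_sq, smul_eq_mul, abs_mul,
      abs_of_nonneg (a := ‖y - z‖ ^ _ * _) (by positivity)]
    calc _ ≤ 1 * (‖y - z‖ ^ (k + 1) * ‖iteratedFDeriv ℝ (k + 1) f z‖) := by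
          gcongr
          · exact hfact _
          · exact hterm _ _
      _ = _ := one_mul _
  have hRsq : R ^ 2 ≤ 2 * ((‖y - z‖ ^ (n + 1)) ^ 2 * ∫ s in (0 : ℝ)..1,
        √s * (s ^ (2 * n) * ‖iteratedFDeriv ℝ (n + 1) f (y + s • (z - y))‖ ^ 2)) := by
    refine (sq_integral_le_two_mul_integral_sqrt_mul_sq (by fun_prop)).trans ?_
    refine mul_le_mul_of_nonneg_left ?_ zero_le_two
    rw [← intervalIntegral.integral_const_mul]
    refine intervalIntegral.integral_mono_on zero_le_one
      (Continuous.intervalIntegrable (by fun_prop) 0 1)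
      (Continuous.intervalIntegrable (by fun_prop) 0 1) fun s _ ↦ ?_
    have h := pow_le_pow_left₀ (abs_nonneg _) (hterm (n + 1) (y + s • (z - y))) 2
    rw [sq_abs] at h
    calc √s * (s ^ n * _) ^ 2 = √s * s ^ (2 * n) *
          (iteratedFDeriv ℝ (n + 1) f (y + s • (z - y)) fun _ ↦ y - z) ^ 2 := by ring
      _ ≤ √s * s ^ (2 * n) *
          (‖y - z‖ ^ (n + 1) * ‖iteratedFDeriv ℝ (n + 1) f (y + s • (z - y))‖) ^ 2 := by
          have : 0 ≤ s ^ (2 * n) := (even_two_mul n).pow_nonneg s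
          gcongr
      _ = _ := by ring
  have hRsq' : ((n.factorial : ℝ)⁻¹ * R) ^ 2 ≤ R ^ 2 := by
    rw [sq_le_sq, abs_mul]
    exact mul_le_of_le_one_left (abs_nonneg _) (hfact n)
  have hadd := add_sq_le (a := A) (b := (n.factorial : ℝ)⁻¹ * R)
  rw [← htaylor] at hadd
  nlinarith [hadd, hAsq, hRsq, hRsq']

section Convex

variable {E : Type*} [NormedAddCommGroup E] [NormedSpace ℝ E] [MeasurableSpace E] [BorelSpace E]
  [FiniteDimensional ℝ E] (μ : Measure E) [μ.IsAddHaarMeasure]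

/-- Contracting a convex set towards one of its points scales integrals by at most `s ^ (-d)`. -/
theorem setIntegral_comp_contraction_le {B : Set E} (hB : Convex ℝ B) (hBm : MeasurableSet B)
    {G : E → ℝ} (hG : IntegrableOn G B μ) (hG0 : ∀ x, 0 ≤ G x) {y : E} (hy : y ∈ B) {s : ℝ}
    (hs : s ∈ Ioc (0 : ℝ) 1) :
    ∫ z in B, G (y + s • (z - y)) ∂μ ≤ (s ^ Module.finrank ℝ E)⁻¹ * ∫ z in B, G z ∂μ := by
  have hint : Integrable (B.indicator G) μ := hG.integrable_indicator hBm
  have hnonneg : ∀ x, 0 ≤ B.indicator G x := fun x ↦ indicator_nonneg (fun x _ ↦ hG0 x) x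
  have hscale : ∫ z, B.indicator G (y + s • (z - y)) ∂μ =
      (s ^ Module.finrank ℝ E)⁻¹ * ∫ z in B, G z ∂μ := by
    rw [integral_sub_right_eq_self (fun z ↦ B.indicator G (y + s • z)) y,
      Measure.integral_comp_smul_of_nonneg μ (fun z ↦ B.indicator G (y + z)) s (hR := hs.1.le),
      integral_add_left_eq_self, integral_indicator hBm, smul_eq_mul]
  have hint' : Integrable (fun z ↦ B.indicator G (y + s • (z - y))) μ :=
    (((hint.comp_add_left y).comp_smul hs.1.ne').comp_sub_right y)
  calc ∫ z in B, G (y + s • (z - y)) ∂μ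
      = ∫ z in B, B.indicator G (y + s • (z - y)) ∂μ := by
        refine setIntegral_congr_fun hBm fun z hz ↦ ?_
        exact (indicator_of_mem (hB.add_smul_sub_mem hy hz ⟨hs.1.le, hs.2⟩) G).symm
    _ ≤ ∫ z, B.indicator G (y + s • (z - y)) ∂μ :=
        setIntegral_le_integral hint' (ae_of_all _ fun z ↦ hnonneg _)
    _ = _ := hscale

theorem Continuous.integrableOn_of_isBounded {B : Set E} (hB : Bornology.IsBounded B) {G : E → ℝ}
    (hG : Continuous G) : IntegrableOn G B μ :=
  (hG.continuousOn.integrableOn_compact hB.isCompact_closure).mono_set subset_closure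

/-- Averaging the contractions towards `y` with the weight `s ^ (2 * n + 1 / 2)` costs only a
constant, provided the dimension is at most `2 * n + 1`. -/
theorem setIntegral_integral_contraction_le {n : ℕ} (hn : Module.finrank ℝ E ≤ 2 * n + 1)
    {B : Set E} (hB : Convex ℝ B) (hBm : MeasurableSet B) (hBb : Bornology.IsBounded B)
    {G : E → ℝ} (hG : Continuous G) (hG0 : ∀ x, 0 ≤ G x) {y : E} (hy : y ∈ B) :
    IntegrableOn (fun z ↦ ∫ s in (0 : ℝ)..1, √s * (s ^ (2 * n) * G (y + s • (z - y)))) B μ ∧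
    ∫ z in B, (∫ s in (0 : ℝ)..1, √s * (s ^ (2 * n) * G (y + s • (z - y)))) ∂μ ≤
      2 * ∫ z in B, G z ∂μ := by
  have hGB : IntegrableOn G B μ := hG.integrableOn_of_isBounded μ hBb
  have hw : IntervalIntegrable (fun s : ℝ ↦ s ^ (-1 / 2 : ℝ)) volume 0 1 :=
    intervalIntegral.intervalIntegrable_rpow' (by norm_num)
  have hprod : Integrable (Function.uncurry fun (z : E) (s : ℝ) ↦
      √s * (s ^ (2 * n) * G (y + s • (z - y))))
      ((μ.restrict B).prod (volume.restrict (Ioc 0 1))) := by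
    rw [Measure.prod_restrict]
    have hc : Continuous (Function.uncurry fun (z : E) (s : ℝ) ↦
        √s * (s ^ (2 * n) * G (y + s • (z - y)))) := by
      unfold Function.uncurry
      fun_prop
    exact (hc.continuousOn.integrableOn_compact (hBb.isCompact_closure.prod isCompact_Icc)).mono_set
      (prod_mono subset_closure Ioc_subset_Icc_self)
  simp only [intervalIntegral.integral_of_le zero_le_one]
  refine ⟨hprod.integral_prod_left, ?_⟩
  rw [integral_integral_swap hprod]
  calc ∫ s in Ioc (0 : ℝ) 1, ∫ z in B, √s * (s ^ (2 * n) * G (y + s • (z - y))) ∂μ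
      ≤ ∫ s in Ioc (0 : ℝ) 1, s ^ (-1 / 2 : ℝ) * ∫ z in B, G z ∂μ := by
        refine setIntegral_mono_on hprod.integral_prod_right
          (((intervalIntegrable_iff_integrableOn_Ioc_of_le zero_le_one).1 hw).mul_const _)
          measurableSet_Ioc fun s hs ↦ ?_
        have hint0 : 0 ≤ ∫ z in B, G z ∂μ := integral_nonneg hG0
        have hpow : s ^ (-1 / 2 : ℝ) = √s * s⁻¹ := by
          rw [Real.sqrt_eq_rpow, ← Real.rpow_neg_one, ← Real.rpow_add hs.1]
          norm_num
        have hle : s ^ (2 * n) * (s ^ Module.finrank ℝ E)⁻¹ ≤ s⁻¹ := by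
          have : s ^ (2 * n + 1) ≤ s ^ Module.finrank ℝ E :=
            pow_le_pow_of_le_one hs.1.le hs.2 hn
          have hs0 := hs.1
          rw [← div_eq_mul_inv, div_le_iff₀ (by positivity), inv_mul_eq_div, le_div_iff₀ hs0]
          rwa [← pow_succ]
        simp only [integral_const_mul]
        calc √s * (s ^ (2 * n) * ∫ z in B, G (y + s • (z - y)) ∂μ)
            ≤ √s * (s ^ (2 * n) * ((s ^ Module.finrank ℝ E)⁻¹ * ∫ z in B, G z ∂μ)) := by
              have := setIntegral_comp_contraction_le μ hB hBm hGB hG0 hy hs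
              have := hs.1.le
              gcongr
          _ = √s * (s ^ (2 * n) * (s ^ Module.finrank ℝ E)⁻¹) * ∫ z in B, G z ∂μ := by ring
          _ ≤ √s * s⁻¹ * ∫ z in B, G z ∂μ := by gcongr
          _ = _ := by rw [hpow]
    _ = 2 * ∫ z in B, G z ∂μ := by
        rw [integral_mul_const, ← intervalIntegral.integral_of_le zero_le_one,
          integral_rpow (Or.inl (by norm_num))]
        norm_num

/-- Deviation of a `C^(n+1)` function from a point value, in mean square over a convex set. -/
theorem setIntegral_sq_sub_le {n : ℕ} (hn : Module.finrank ℝ E ≤ 2 * n + 1)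
    {B : Set E} (hB : Convex ℝ B) (hBm : MeasurableSet B) {r : ℝ} (hr : ∀ y ∈ B, ∀ z ∈ B,
    ‖y - z‖ ≤ r) (hBb : Bornology.IsBounded B) {f : E → ℝ} (hf : ContDiff ℝ (n + 1) f)
    {y : E} (hy : y ∈ B) :
    ∫ z in B, (f z - f y) ^ 2 ∂μ ≤ (2 * n + 8) * ∑ i ∈ Finset.Icc 1 (n + 1),
      r ^ (2 * i) * ∫ z in B, ‖iteratedFDeriv ℝ i f z‖ ^ 2 ∂μ := by
  have hfc : Continuous f := hf.continuous
  have hcont : ∀ k ≤ n + 1, Continuous fun z ↦ ‖iteratedFDeriv ℝ k f z‖ ^ 2 := fun k hk ↦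
    (hf.continuous_iteratedFDeriv (by exact_mod_cast hk)).norm.pow 2
  have hr0 : 0 ≤ r := (norm_nonneg _).trans (hr y hy y hy)
  obtain ⟨hint, hle⟩ := setIntegral_integral_contraction_le μ hn hB hBm hBb
    (hcont (n + 1) le_rfl) (fun x ↦ by positivity) hy
  have hintk : ∀ k ∈ Finset.range n, IntegrableOn
      (fun z ↦ r ^ (2 * (k + 1)) * ‖iteratedFDeriv ℝ (k + 1) f z‖ ^ 2) B μ := fun k hk ↦
    ((hcont (k + 1) (by have := Finset.mem_range.1 hk; omega)).integrableOn_of_isBounded μ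
      hBb).const_mul _
  have hintsum := integrable_finsetSum _ hintk
  have hnonneg : ∀ i, 0 ≤ r ^ (2 * i) * ∫ z in B, ‖iteratedFDeriv ℝ i f z‖ ^ 2 ∂μ := fun i ↦
    mul_nonneg (by positivity) (integral_nonneg fun _ ↦ by positivity)
  calc ∫ z in B, (f z - f y) ^ 2 ∂μ
      ≤ ∫ z in B, (2 * n * (∑ k ∈ Finset.range n,
            r ^ (2 * (k + 1)) * ‖iteratedFDeriv ℝ (k + 1) f z‖ ^ 2) +
          4 * r ^ (2 * (n + 1)) * ∫ s in (0 : ℝ)..1,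
            √s * (s ^ (2 * n) * ‖iteratedFDeriv ℝ (n + 1) f (y + s • (z - y))‖ ^ 2)) ∂μ := by
        refine setIntegral_mono_on (Continuous.integrableOn_of_isBounded μ hBb (by fun_prop))
          ((hintsum.const_mul _).add (hint.const_mul _)) hBm fun z hz ↦ ?_
        refine (sq_sub_le_of_contDiff hf y z).trans ?_
        have hpow : ∀ k : ℕ, (‖y - z‖ ^ k) ^ 2 ≤ r ^ (2 * k) := fun k ↦ by
          rw [← pow_mul, mul_comm k 2]
          exact pow_le_pow_left₀ (norm_nonneg _) (hr y hy z hz) _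
        have hI : 0 ≤ ∫ s in (0 : ℝ)..1,
            √s * (s ^ (2 * n) * ‖iteratedFDeriv ℝ (n + 1) f (y + s • (z - y))‖ ^ 2) :=
          intervalIntegral.integral_nonneg zero_le_one fun s _ ↦ by
            have : 0 ≤ s ^ (2 * n) := (even_two_mul n).pow_nonneg s
            positivity
        rw [mul_assoc 4]
        gcongr
        · exact hpow _
        · exact hpow _
    _ ≤ 2 * n * (∑ k ∈ Finset.range n,
            r ^ (2 * (k + 1)) * ∫ z in B, ‖iteratedFDeriv ℝ (k + 1) f z‖ ^ 2 ∂μ) +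
          4 * r ^ (2 * (n + 1)) * (2 * ∫ z in B, ‖iteratedFDeriv ℝ (n + 1) f z‖ ^ 2 ∂μ) := by
        rw [integral_add (hintsum.const_mul _) (hint.const_mul _), integral_const_mul,
          integral_const_mul, integral_finsetSum _ hintk]
        simp only [integral_const_mul]
        gcongr
    _ ≤ _ := by
        have hreindex : ∀ F : ℕ → ℝ, ∑ i ∈ Finset.Icc 1 (n + 1), F i =
            ∑ k ∈ Finset.range n, F (k + 1) + F (n + 1) := fun F ↦ by
          rw [← Finset.Ico_add_one_right_eq_Icc, Finset.sum_Ico_eq_sum_range, Nat.add_sub_cancel,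
            Finset.sum_range_succ, add_comm 1 n]
          simp only [add_comm 1]
        rw [hreindex]
        have h1 := Finset.sum_nonneg fun k (_ : k ∈ Finset.range n) ↦ hnonneg (k + 1)
        have h2 := hnonneg (n + 1)
        have h3 : (0 : ℝ) ≤ n := n.cast_nonneg
        nlinarith [mul_nonneg h3 h2]

end Convex

/-- If `f` is within `K` of each of its values on `U` in mean square, then it is within `K` of
each of its weighted averages. -/
theorem setIntegral_sq_sub_weightedAverage_le {α : Type*} [MeasurableSpace α] {μ : Measure α}
    {U : Set α} (hU : MeasurableSet U) (hUfin : μ U ≠ ⊤) {f ψ : α → ℝ} (hf : IntegrableOn f U μ)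
    (hf2 : IntegrableOn (fun x ↦ f x ^ 2) U μ) (hψ : IntegrableOn ψ U μ)
    (hfψ : IntegrableOn (fun x ↦ f x * ψ x) U μ) (hψ0 : ∀ x, 0 ≤ ψ x)
    (hpos : 0 < ∫ x in U, ψ x ∂μ) {K : ℝ} (hK : ∀ y ∈ U, ∫ x in U, (f x - f y) ^ 2 ∂μ ≤ K) :
    ∫ x in U, (f x - (∫ y in U, ψ y ∂μ)⁻¹ * ∫ y in U, f y * ψ y ∂μ) ^ 2 ∂μ ≤ K := by
  set p := ∫ y in U, ψ y ∂μ
  set c := p⁻¹ * ∫ y in U, f y * ψ y ∂μ with hc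
  have hcp : ∫ y in U, f y * ψ y ∂μ = c * p := by
    rw [hc]
    field_simp
  have hconst : ∀ a : ℝ, IntegrableOn (fun _ ↦ a) U μ := fun a ↦ integrableOn_const hUfin
  have hquad : ∀ a : ℝ, ∫ x in U, (f x - a) ^ 2 ∂μ =
      ∫ x in U, f x ^ 2 ∂μ - 2 * a * ∫ x in U, f x ∂μ + μ.real U * a ^ 2 := fun a ↦ by
    have : ∀ x, (f x - a) ^ 2 = f x ^ 2 - 2 * a * f x + a ^ 2 := fun x ↦ by ring
    simp only [this]
    have hsub : IntegrableOn (fun x ↦ f x ^ 2 - 2 * a * f x) U μ := hf2.sub (hf.const_mul _)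
    rw [integral_add hsub (hconst _), integral_sub hf2 (hf.const_mul _),
      integral_const_mul, setIntegral_const, smul_eq_mul]
  set b := 2 * μ.real U * c - 2 * ∫ x in U, f x ∂μ with hb
  set A := ∫ x in U, (f x - c) ^ 2 ∂μ with hA
  have htangent : ∀ y ∈ U, A + b * (f y - c) ≤ K := fun y hy ↦ by
    have h := hK y hy
    rw [hquad] at h
    rw [hA, hquad, hb]
    nlinarith [mul_nonneg (measureReal_nonneg (μ := μ) (s := U)) (sq_nonneg (f y - c))]
  have hmono : ∫ y in U, ((A - b * c) * ψ y + b * (f y * ψ y)) ∂μ ≤ ∫ y in U, K * ψ y ∂μ := by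
    refine setIntegral_mono_on ((hψ.const_mul _).add (hfψ.const_mul _)) (hψ.const_mul _) hU
      fun y hy ↦ ?_
    nlinarith [mul_le_mul_of_nonneg_right (htangent y hy) (hψ0 y)]
  rw [integral_add (hψ.const_mul _) (hfψ.const_mul _)] at hmono
  simp only [integral_const_mul, hcp] at hmono
  refine le_of_mul_le_mul_right ?_ hpos
  linarith

/-- A function that is `C^m` near a closed set agrees near that set with a globally `C^m` one. -/
theorem exists_contDiff_eventuallyEq_nhdsSet {E : Type*} [NormedAddCommGroup E] [NormedSpace ℝ E]
    [FiniteDimensional ℝ E] {m : ℕ} {f : E → ℝ} {s V : Set E} (hs : IsClosed s) (hV : IsOpen V)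
    (hsV : s ⊆ V) (hf : ContDiffOn ℝ m f V) :
    ∃ g : E → ℝ, ContDiff ℝ m g ∧ ∀ x ∈ s, g =ᶠ[nhds x] f := by
  obtain ⟨χ, hχ0, hχ1, -⟩ := exists_contMDiffMap_zero_one_nhds_of_isClosed
    (modelWithCornersSelf ℝ E) (n := m) hV.isClosed_compl hs
    (disjoint_compl_left_iff_subset.2 hsV)
  have hχ : ContDiff ℝ m χ := χ.contMDiff.contDiff
  refine ⟨fun x ↦ χ x * f x, contDiff_iff_contDiffAt.2 fun x ↦ ?_, fun x hx ↦ ?_⟩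
  · by_cases hx : x ∈ V
    · exact hχ.contDiffAt.mul (hf.contDiffAt (hV.mem_nhds hx))
    · have hzero : (fun x ↦ χ x * f x) =ᶠ[nhds x] fun _ ↦ 0 := by
        filter_upwards [eventually_nhdsSet_iff_forall.1 hχ0 x hx] with z hz
        simp [hz]
      exact contDiffAt_const.congr_of_eventuallyEq hzero
  · filter_upwards [eventually_nhdsSet_iff_forall.1 hχ1 x hx] with z hz
    simp [hz]

/-- Local Poincaré-type inequality (Euclidean model of Lemma 4.3): for `m > d/2`
there is `C = C(d,m)` such that for every ball `B(x₀,r) ⊆ ℝ^d`, every `f` which is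
`C^m` on a neighborhood of the closed ball, every measurable `U ⊆ B(x₀, r/2)` and
every weight `ψ ∈ C₀^∞(U)`, `0 ≤ ψ`, `ψ ≢ 0`, the deviation of `f` from its
`ψ`-average `Ψ(f) = (∫_U ψ)⁻¹ ∫_U f ψ` satisfies
`‖f - Ψ(f)‖²_{L²(U)} ≤ C ∑_{1 ≤ i ≤ m} r^{2i} ‖D^i f‖²_{L²(B(x₀,r))}`. -/
theorem stmt_18 (d m : ℕ) (hm : d < 2 * m) :
    ∃ C : ℝ, 0 < C ∧
      ∀ (x₀ : EuclideanSpace ℝ (Fin d)) (r : ℝ), 0 < r →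
      ∀ f : EuclideanSpace ℝ (Fin d) → ℝ,
        (∃ V : Set (EuclideanSpace ℝ (Fin d)), IsOpen V ∧ closedBall x₀ r ⊆ V ∧
          ContDiffOn ℝ (m : ℕ∞) f V) →
      ∀ U : Set (EuclideanSpace ℝ (Fin d)), MeasurableSet U → U ⊆ ball x₀ (r / 2) →
      ∀ ψ : EuclideanSpace ℝ (Fin d) → ℝ,
        ContDiff ℝ (⊤ : ℕ∞) ψ → HasCompactSupport ψ → tsupport ψ ⊆ U →
        (∀ x, 0 ≤ ψ x) → 0 < (∫ x in U, ψ x) →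
        (∫ x in U, (f x - (∫ y in U, ψ y)⁻¹ * ∫ y in U, f y * ψ y) ^ 2) ≤
          C * ∑ i ∈ Finset.Icc 1 m,
            r ^ (2 * i) * ∫ x in ball x₀ r, ‖iteratedFDeriv ℝ i f x‖ ^ 2 := by
  obtain ⟨n, rfl⟩ : ∃ n, m = n + 1 := ⟨m - 1, by omega⟩
  refine ⟨2 * n + 8, by positivity, ?_⟩
  rintro x₀ r hr f ⟨V, hV, hballV, hfV⟩ U hU hUball ψ hψ - - hψ0 hψpos
  obtain ⟨g, hg, hgf⟩ := exists_contDiff_eventuallyEq_nhdsSet isClosed_closedBall hV hballV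
    (m := n + 1) (by simpa using hfV)
  have hsub : ball x₀ (r / 2) ⊆ ball x₀ r := ball_subset_ball (by linarith)
  have hUeq : ∀ x ∈ U, f x = g x := fun x hx ↦
    (hgf x (ball_subset_closedBall (hsub (hUball hx)))).eq_of_nhds.symm
  have hUb : Bornology.IsBounded U := isBounded_ball.subset hUball
  have hgc : Continuous g := hg.continuous
  have hψcont : Continuous ψ := hψ.continuous
  have hderiv : ∀ i, ∫ x in ball x₀ r, ‖iteratedFDeriv ℝ i f x‖ ^ 2 =
      ∫ x in ball x₀ r, ‖iteratedFDeriv ℝ i g x‖ ^ 2 := fun i ↦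
    setIntegral_congr_fun measurableSet_ball fun x hx ↦ by
      simp only [((hgf x (ball_subset_closedBall hx)).iteratedFDeriv ℝ i).eq_of_nhds]
  have havg : ∫ y in U, f y * ψ y = ∫ y in U, g y * ψ y :=
    setIntegral_congr_fun hU fun y hy ↦ by simp only [hUeq y hy]
  rw [havg, setIntegral_congr_fun hU fun x hx ↦ by rw [hUeq x hx]]
  simp only [hderiv]
  refine setIntegral_sq_sub_weightedAverage_le hU hUb.measure_lt_top.ne
    (hgc.integrableOn_of_isBounded volume hUb)
    (Continuous.integrableOn_of_isBounded volume hUb (by fun_prop))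
    (hψcont.integrableOn_of_isBounded volume hUb)
    (Continuous.integrableOn_of_isBounded volume hUb (by fun_prop)) hψ0 hψpos fun y hy ↦ ?_
  calc ∫ x in U, (g x - g y) ^ 2 ≤ ∫ x in ball x₀ (r / 2), (g x - g y) ^ 2 :=
        setIntegral_mono_set
          (Continuous.integrableOn_of_isBounded volume isBounded_ball (by fun_prop))
          (ae_of_all _ fun x ↦ sq_nonneg _) hUball.eventuallyLE
    _ ≤ _ := setIntegral_sq_sub_le volume (n := n) (r := r)
        (by rw [finrank_euclideanSpace_fin]; omega) (convex_ball _ _) measurableSet_ball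
        (fun y hy z hz ↦ by
          rw [← dist_eq_norm]
          linarith [dist_triangle_right y z x₀, mem_ball.1 hy, mem_ball.1 hz])
        isBounded_ball (by exact_mod_cast hg) (hUball hy)
    _ ≤ _ := by
        gcongr with i hi
        · exact ae_of_all _ fun x ↦ by positivity
        · refine Continuous.integrableOn_of_isBounded volume isBounded_ball ?_
          exact (hg.continuous_iteratedFDeriv
            (by exact_mod_cast (Finset.mem_Icc.1 hi).2)).norm.pow 2
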